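/- Let G = (V,E) be a DAMG and let q_G : E → ℚ be the path uniform weight function q_G(e) := π(t(e))/π(h(e)). Then the total path weight function s_G of (G, q_G) is given by s_G(x|y) = (π(x)/π(y)) · π(x,y) for all x, y ∈ V; in particular, for every root r ∈ Rt(G) and every y ∈ V, s_G(r|y) = π(r,y)/π(y). -/

import Mathlib

open scoped Classical

/-- A directed multigraph: finite sets of vertices/edges with tail and head maps. -/
structure MGraph (V E : Type*) where
  tl : E → V
  hd : E → V

namespace MGraph

variable {V E R A : Type*}

/-- `G` is a directed acyclic multigraph (DAMG) if it admits a topological ordering,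
i.e. a linear (injective) order on the vertices such that tails precede heads. -/
def IsDAMG (G : MGraph V E) : Prop :=
  ∃ ord : V → ℕ, Function.Injective ord ∧ ∀ e : E, ord (G.tl e) < ord (G.hd e)

/-- `G.IsPath x y l` : the list of edges `l` is a directed path from `x` to `y`. -/
def IsPath (G : MGraph V E) : V → V → List E → Prop
  | x, y, [] => x = y
  | x, y, e :: es => G.tl e = x ∧ G.IsPath (G.hd e) y es

/-- the set `E(x,y)` of edges from `x` to `y` -/
def edges (G : MGraph V E) (x y : V) : Set E := {e | G.tl e = x ∧ G.hd e = y}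

/-- there is a directed path from `x` to `y` (possibly trivial) -/
def Reaches (G : MGraph V E) (x y : V) : Prop := ∃ l : List E, G.IsPath x y l

/-- ancestors of `y` (including `y`) -/
def anc (G : MGraph V E) (y : V) : Set V := {x | G.Reaches x y}

/-- descendants of `x` (including `x`) -/
def desc (G : MGraph V E) (x : V) : Set V := {y | G.Reaches x y}

/-- parents of `y` -/
def pa (G : MGraph V E) (y : V) : Set V := {x | ∃ e : E, G.tl e = x ∧ G.hd e = y}

/-- roots (sources) of `G` -/
def roots (G : MGraph V E) : Set V := {x | G.pa x = ∅}

/-- leaves (sinks) of `G` -/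
def leaves (G : MGraph V E) : Set V := {x | ∀ e : E, G.tl e ≠ x}

/-- `π(x,y)` : the number of directed paths from `x` to `y` -/
noncomputable def nPaths (G : MGraph V E) (x y : V) : ℕ :=
  {l : List E | G.IsPath x y l}.ncard

/-- `π(y)` : the number of directed paths from roots to `y` -/
noncomputable def nPathsRt (G : MGraph V E) (y : V) : ℕ :=
  ∑ᶠ r ∈ G.roots, G.nPaths r y

/-- pairwise weight `q(x|y) := Σ_{e ∈ E(x,y)} q(e)` -/
noncomputable def pw [AddCommMonoid R] (G : MGraph V E) (q : E → R) (x y : V) : R :=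
  ∑ᶠ e ∈ G.edges x y, q e

/-- a weight function is normalized if pairwise weights into any non-root sum to 1 -/
def Normalized [CommRing R] (G : MGraph V E) (q : E → R) : Prop :=
  ∀ y : V, y ∉ G.roots → (∑ᶠ x : V, G.pw q x y) = 1

/-- `w` is the Möbius transform (synergy function) of `v` w.r.t. `G` -/
def IsMoebiusTransform [AddCommGroup A] (G : MGraph V E) (v w : V → A) : Prop :=
  ∀ x : V, w x = v x - ∑ᶠ y ∈ G.anc x \ {x}, w y

/-- `μ` is the Möbius function of `G` -/
def IsMoebiusFunction (G : MGraph V E) (μ : V → V → ℤ) : Prop :=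
  (∀ x y : V, x ∉ G.anc y → μ x y = 0) ∧
  (∀ x : V, μ x x = 1) ∧
  (∀ x y : V, x ∈ G.anc y → x ≠ y →
    μ x y = -(∑ᶠ z ∈ (G.desc x ∩ G.anc y) \ {y}, μ x z))

/-- `s` is the total path weight function of the edge weight function `q` -/
def IsTotalWeight [CommRing R] (G : MGraph V E) (q : E → R) (s : V → V → R) : Prop :=
  (∀ x y : V, y ∉ G.desc x → s x y = 0) ∧
  (∀ x : V, s x x = 1) ∧
  (∀ x y : V, y ∈ G.desc x → y ≠ x → s x y = ∑ᶠ z ∈ G.pa y, s x z * G.pw q z y)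

/-- `τ : V → R` is the extension of a root weight function via the recursion
`τ(y) = Σ_{z ∈ Pa(y)} τ(z)·ς(z,y)` for non-roots `y` -/
def IsRootExtension [CommRing R] (G : MGraph V E) (ς : E → R) (τ : V → R) : Prop :=
  ∀ y : V, y ∉ G.roots → τ y = ∑ᶠ z ∈ G.pa y, τ z * G.pw ς z y

/-- the list of vertices visited by a path starting at `x` -/
def pathVerts (G : MGraph V E) (x : V) (l : List E) : List V := x :: l.map G.hd

/-- `X` is a horizontal subset of `G` : every directed path from a root to a leaf
contains exactly one element of `X` -/
def Horizontal (G : MGraph V E) (X : Set V) : Prop :=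
  ∀ r ∈ G.roots, ∀ lf ∈ G.leaves, ∀ p : List E, G.IsPath r lf p →
    (G.pathVerts r p).countP (fun v => decide (v ∈ X)) = 1

/-- the path uniform weight function `q_G(e) := π(t(e))/π(h(e))` -/
noncomputable def pathUniform (G : MGraph V E) : E → ℚ :=
  fun e => (G.nPathsRt (G.tl e) : ℚ) / (G.nPathsRt (G.hd e) : ℚ)

/-- the unanimity value function centred at `y` -/
noncomputable def zeta [CommRing R] (G : MGraph V E) (y : V) : V → R :=
  fun x => if x ∈ G.desc y then (1 : R) else 0

/-! ### Projection onto the complement of a single element -/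

/-- the edge type of the projection `G^{∖z}` :
old edges avoiding `z`, together with a new edge for every pair of edges through `z` -/
def proj1E (G : MGraph V E) (z : V) : Type _ :=
  {e : E // G.tl e ≠ z ∧ G.hd e ≠ z} ⊕
  {p : E × E // G.hd p.1 = z ∧ G.tl p.2 = z ∧ G.tl p.1 ≠ z ∧ G.hd p.2 ≠ z}

/-- the projection `G^{∖z}` of `G` onto the complement of `z` -/
def proj1 (G : MGraph V E) (z : V) : MGraph {x : V // x ≠ z} (G.proj1E z) where
  tl := Sum.elim (fun e => ⟨G.tl e.1, e.2.1⟩) (fun p => ⟨G.tl p.1.1, p.2.2.2.1⟩)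
  hd := Sum.elim (fun e => ⟨G.hd e.1, e.2.2⟩) (fun p => ⟨G.hd p.1.2, p.2.2.2.2⟩)

/-- the projected weight function `q^{∖z}` -/
def proj1Q [CommRing R] (G : MGraph V E) (z : V) (q : E → R) : G.proj1E z → R :=
  Sum.elim (fun e => q e.1) (fun p => q p.1.1 * q p.1.2)

/-- the single-element projection `w^{∖z}(x) := w(x) + q(x|z)·w(z)` of a synergy function -/
noncomputable def wProjOne [CommRing R] [AddCommGroup A] [Module R A]
    (G : MGraph V E) (q : E → R) (w : V → A) (z : V) : {x : V // x ≠ z} → A :=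
  fun x => w x.1 + G.pw q x.1 z • w z

/-! ### Projection onto the complement of a subset -/

/-- consecutive edges of the list compose -/
def IsChain (G : MGraph V E) : List E → Prop
  | [] => True
  | [_] => True
  | e :: e' :: es => G.hd e = G.tl e' ∧ G.IsChain (e' :: es)

/-- the interior vertices of a path (all visited vertices except the endpoints) -/
def interior (G : MGraph V E) : List E → List V
  | [] => []
  | [_] => []
  | e :: e' :: es => G.hd e :: G.interior (e' :: es)

/-- an edge of the projection `G^{∖S}` : a nonempty directed path of `G` whose
interior vertices lie in `S` and whose endpoints lie outside `S`
(iterating `E^{∖z}(x,y) := E(x,y) ⊔ (E(x,z) × E(z,y))` over the elements of `S`) -/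
structure ProjEdge (G : MGraph V E) (S : Set V) where
  first : E
  rest : List E
  chain : G.IsChain (first :: rest)
  tl_notin : G.tl first ∉ S
  hd_notin : G.hd ((first :: rest).getLast (List.cons_ne_nil _ _)) ∉ S
  interior_mem : ∀ v ∈ G.interior (first :: rest), v ∈ S

/-- the projection `G^{∖S}` of `G` onto the complement of the subset `S` -/
def projG (G : MGraph V E) (S : Set V) : MGraph {x : V // x ∉ S} (G.ProjEdge S) where
  tl := fun p => ⟨G.tl p.first, p.tl_notin⟩
  hd := fun p => ⟨G.hd ((p.first :: p.rest).getLast (List.cons_ne_nil _ _)), p.hd_notin⟩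

/-- the projected weight function `q^{∖S}` (weights multiply along collapsed paths) -/
def projQ [CommRing R] (G : MGraph V E) (S : Set V) (q : E → R) :
    G.ProjEdge S → R :=
  fun p => ((p.first :: p.rest).map q).prod

/-! ### Iterated one-element projections of pairwise weights and synergy functions -/

/-- one projection step on pairwise weights: `q^{∖z}(x|y) = q(x|y) + q(x|z)·q(z|y)` -/
def pwStep [CommRing R] (Q : V → V → R) (z : V) : V → V → R :=
  fun x y => Q x y + Q x z * Q z y

/-- one projection step on a synergy function: `w^{∖z}(x) = w(x) + q(x|z)·w(z)` -/
def wStep [CommRing R] [AddCommGroup A] [Module R A]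
    (Q : V → V → R) (w : V → A) (z : V) : V → A :=
  fun x => w x + Q x z • w z

/-- iterated one-element projections along a list of vertices -/
def projIter [CommRing R] [AddCommGroup A] [Module R A] :
    List V → (V → V → R) → (V → A) → ((V → V → R) × (V → A))
  | [], Q, w => (Q, w)
  | z :: zs, Q, w => projIter zs (pwStep Q z) (wStep Q w z)

/-! ### Subgraph on a subset of vertices -/

/-- edges of `G` with both endpoints in `S` -/
def subE (G : MGraph V E) (S : Set V) : Type _ := {e : E // G.tl e ∈ S ∧ G.hd e ∈ S}

/-- the subgraph of `G` on the vertex subset `S` -/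
def subgraph (G : MGraph V E) (S : Set V) : MGraph ↥S (G.subE S) where
  tl := fun e => ⟨G.tl e.1, e.2.1⟩
  hd := fun e => ⟨G.hd e.1, e.2.2⟩

/-- the canonical identification `(V∖{z})∖{u} ≃ (V∖{u})∖{z}` -/
def swapCompl (z u : V) (hzu : z ≠ u) :
    {y : {x : V // x ≠ z} // y ≠ ⟨u, Ne.symm hzu⟩} ≃
      {y : {x : V // x ≠ u} // y ≠ ⟨z, hzu⟩} where
  toFun y := ⟨⟨y.1.1, fun h => y.2 (Subtype.ext h)⟩, fun h => y.1.2 (congrArg Subtype.val h)⟩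
  invFun y := ⟨⟨y.1.1, fun h => y.2 (Subtype.ext h)⟩, fun h => y.1.2 (congrArg Subtype.val h)⟩
  left_inv y := rfl
  right_inv y := rfl

end MGraph

namespace MGraph

theorem isPath_snoc {V E : Type*} (G : MGraph V E) (x y : V) (l : List E) (e : E) :
    G.IsPath x y (l ++ [e]) ↔ G.IsPath x (G.tl e) l ∧ G.hd e = y := by
  induction l generalizing x with
  | nil => simp [IsPath, eq_comm]
  | cons a l ih => simp [IsPath, ih, and_assoc]

theorem isPath_len {V E : Type*} (G : MGraph V E) (ord : V → ℕ)
    (ho : ∀ e : E, ord (G.tl e) < ord (G.hd e)) (x y : V) (l : List E)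
    (h : G.IsPath x y l) : ord x + l.length ≤ ord y := by
  induction l generalizing x with
  | nil => simp only [IsPath] at h; subst h; simp
  | cons a l ih =>
    obtain ⟨rfl, h2⟩ := h
    have := ih _ h2
    have := ho a
    simp only [List.length_cons]
    omega

theorem paths_finite {V E : Type*} [Finite E] (G : MGraph V E) (hG : G.IsDAMG) (x y : V) :
    {l : List E | G.IsPath x y l}.Finite := by
  obtain ⟨ord, -, ho⟩ := hG
  refine (List.finite_length_le E (ord y)).subset fun l hl => ?_
  have := G.isPath_len ord ho x y l hl
  simp only [Set.mem_setOf_eq]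
  omega

theorem nPaths_self {V E : Type*} (G : MGraph V E) (hG : G.IsDAMG) (x : V) :
    G.nPaths x x = 1 := by
  obtain ⟨ord, -, ho⟩ := hG
  rw [nPaths, Set.ncard_eq_one]
  refine ⟨[], Set.ext fun l => ⟨fun hl => ?_, fun hl => ?_⟩⟩
  · have := G.isPath_len ord ho x x l hl
    exact List.length_eq_zero_iff.mp (by omega)
  · rw [Set.mem_singleton_iff] at hl
    subst hl
    simp [IsPath]

theorem nPaths_rec {V E : Type*} [Fintype V] [Finite E] (G : MGraph V E) (hG : G.IsDAMG)
    (x y : V) (hxy : y ≠ x) :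
    G.nPaths x y = ∑ z : V, G.nPaths x z * (G.edges z y).ncard := by
  have hfin : ∀ z, Finite {l : List E | G.IsPath x z l} := fun z => G.paths_finite hG x z
  let f : (Σ z : V, {l : List E | G.IsPath x z l} × (G.edges z y)) →
      {l : List E | G.IsPath x y l} := fun p =>
    ⟨p.2.1.1 ++ [p.2.2.1], (G.isPath_snoc x y _ _).2
      ⟨by rw [p.2.2.2.1]; exact p.2.1.2, p.2.2.2.2⟩⟩
  have hf : Function.Bijective f := by
    constructor
    · rintro ⟨z, ⟨l, hl⟩, ⟨e, he⟩⟩ ⟨z', ⟨l', hl'⟩, ⟨e', he'⟩⟩ h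
      have h1 : l ++ [e] = l' ++ [e'] := congrArg Subtype.val h
      have h2 := List.append_inj' h1 rfl
      obtain ⟨rfl, h3⟩ := h2
      obtain rfl : e = e' := by simpa using h3
      obtain rfl : z = z' := he.1.symm.trans he'.1
      rfl
    · rintro ⟨l, hl⟩
      rcases List.eq_nil_or_concat l with rfl | ⟨l', e, rfl⟩
      · exact absurd (show x = y from hl).symm hxy
      · have hl2 := (G.isPath_snoc x y l' e).1 (by simpa using hl)
        exact ⟨⟨G.tl e, ⟨l', hl2.1⟩, ⟨e, rfl, hl2.2⟩⟩, Subtype.ext (by simp [f])⟩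
  have := Nat.card_congr (Equiv.ofBijective f hf)
  rw [Nat.card_sigma] at this
  simp only [Nat.card_prod, Nat.card_coe_set_eq] at this
  exact this.symm

theorem nPaths_pos {V E : Type*} [Finite E] (G : MGraph V E) (hG : G.IsDAMG)
    (x y : V) (h : G.Reaches x y) : 0 < G.nPaths x y := by
  rw [nPaths, Set.ncard_pos (G.paths_finite hG x y)]
  exact h

theorem nPaths_zero {V E : Type*} (G : MGraph V E)
    (x y : V) (h : ¬ G.Reaches x y) : G.nPaths x y = 0 := by
  have : {l : List E | G.IsPath x y l} = ∅ :=
    Set.eq_empty_iff_forall_notMem.2 fun l hl => h ⟨l, hl⟩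
  rw [nPaths, this, Set.ncard_empty]

theorem exists_root {V E : Type*} (G : MGraph V E) (hG : G.IsDAMG) (y : V) :
    ∃ r ∈ G.roots, G.Reaches r y := by
  obtain ⟨ord, -, ho⟩ := hG
  induction hn : ord y using Nat.strong_induction_on generalizing y with
  | _ n ih =>
    by_cases hy : y ∈ G.roots
    · exact ⟨y, hy, [], rfl⟩
    · obtain ⟨z, e, rfl, rfl⟩ := Set.nonempty_iff_ne_empty.2 hy
      obtain ⟨r, hr, l, hl⟩ := ih _ (hn ▸ ho e) _ rfl
      exact ⟨r, hr, l ++ [e], (G.isPath_snoc _ _ _ _).2 ⟨hl, rfl⟩⟩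

theorem nPathsRt_pos {V E : Type*} [Finite V] [Finite E] (G : MGraph V E) (hG : G.IsDAMG)
    (y : V) : 0 < G.nPathsRt y := by
  obtain ⟨r, hr, h⟩ := G.exists_root hG y
  have h1 := G.nPaths_pos hG r y h
  rw [nPathsRt, finsum_mem_eq_finite_toFinset_sum _ (Set.toFinite _)]
  exact Finset.sum_pos' (fun _ _ => Nat.zero_le _) ⟨r, by simpa using hr, h1⟩

theorem nPathsRt_root {V E : Type*} (G : MGraph V E) (hG : G.IsDAMG)
    (r : V) (hr : r ∈ G.roots) : G.nPathsRt r = 1 := by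
  have h : ∀ z, z ≠ r → G.nPaths z r = 0 := by
    intro z hz
    refine G.nPaths_zero z r ?_
    rintro ⟨l, hl⟩
    rcases List.eq_nil_or_concat l with rfl | ⟨l', e, rfl⟩
    · exact hz hl
    · have hl2 := (G.isPath_snoc z r l' e).1 (by simpa using hl)
      have : G.tl e ∈ G.pa r := ⟨e, rfl, hl2.2⟩
      rw [show G.pa r = ∅ from hr] at this
      exact this
  rw [nPathsRt, finsum_eq_single _ r (fun z hz => by simp [h z hz])]
  simp [hr, G.nPaths_self hG]

theorem pw_pathUniform {V E : Type*} [Finite E] (G : MGraph V E) (z y : V) :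
    G.pw G.pathUniform z y =
      ((G.edges z y).ncard : ℚ) * ((G.nPathsRt z : ℚ) / (G.nPathsRt y : ℚ)) := by
  have h : G.pw G.pathUniform z y =
      ∑ᶠ e ∈ G.edges z y, ((G.nPathsRt z : ℚ) / (G.nPathsRt y : ℚ)) := by
    refine finsum_mem_congr rfl fun e he => ?_
    rw [pathUniform, he.1, he.2]
  rw [h, finsum_mem_eq_finite_toFinset_sum _ (Set.toFinite _), Finset.sum_const,
    nsmul_eq_mul, Set.ncard_eq_toFinset_card _ (Set.toFinite _)]

end MGraph

/-- **Path uniform total path weights.**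
For the path uniform weight function `q_G(e) := π(t(e))/π(h(e))` of the DAMG `G`,
the total path weight function `s_G` of `(G, q_G)` satisfies
`s_G(x|y) = (π(x)/π(y))·π(x,y)` for all `x, y ∈ V`; in particular for every root
`r` and every `y`: `s_G(r|y) = π(r,y)/π(y)`. -/
theorem path_uniform_total_weights
    {V E : Type*} [Finite V] [Finite E]
    (G : MGraph V E) (hG : G.IsDAMG)
    (s : V → V → ℚ) (hs : G.IsTotalWeight G.pathUniform s) :
    (∀ x y : V,
      s x y = ((G.nPathsRt x : ℚ) / (G.nPathsRt y : ℚ)) * (G.nPaths x y : ℚ)) ∧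
    (∀ r ∈ G.roots, ∀ y : V, s r y = (G.nPaths r y : ℚ) / (G.nPathsRt y : ℚ)) := by
  have : Fintype V := Fintype.ofFinite V
  have hpos : ∀ y, (G.nPathsRt y : ℚ) ≠ 0 := fun y =>
    Nat.cast_ne_zero.2 (G.nPathsRt_pos hG y).ne'
  have main : ∀ x y : V,
      s x y = ((G.nPathsRt x : ℚ) / (G.nPathsRt y : ℚ)) * (G.nPaths x y : ℚ) := by
    obtain ⟨h0, h1, h2⟩ := hs
    obtain ⟨ord, -, ho⟩ := id hG
    intro x y
    induction hn : ord y using Nat.strong_induction_on generalizing y with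
    | _ n ih =>
      by_cases hd : y ∈ G.desc x
      · by_cases hxy : y = x
        · subst hxy
          rw [h1, G.nPaths_self hG, div_self (hpos y)]
          simp
        · rw [h2 x y hd hxy, G.nPaths_rec hG x y hxy]
          push_cast
          rw [Finset.mul_sum, finsum_mem_eq_finite_toFinset_sum _ (Set.toFinite _)]
          refine Finset.sum_subset_zero_on_sdiff (Finset.subset_univ _) (fun z hz => ?_)
            (fun z hz => ?_)
          · have : G.edges z y = ∅ := by
              refine Set.eq_empty_iff_forall_notMem.2 fun e he => ?_
              simp only [Finset.mem_sdiff, Finset.mem_univ, true_and,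
                Set.Finite.mem_toFinset] at hz
              exact hz ⟨e, he⟩
            simp [this]
          · simp only [Set.Finite.mem_toFinset] at hz
            obtain ⟨e, rfl, rfl⟩ := hz
            rw [ih _ (hn ▸ ho e) _ rfl, G.pw_pathUniform]
            have := hpos (G.tl e)
            have := hpos (G.hd e)
            field_simp
      · rw [h0 x y hd, G.nPaths_zero x y hd]
        simp
  refine ⟨main, fun r hr y => ?_⟩
  rw [main, G.nPathsRt_root hG r hr]
  ring
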